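/- arXiv:1309.5292 — 2 statements merged into one kernel-verified Lean document; each statement's English description precedes it below -/
import Mathlib

section
/- For all sufficiently large n, f(n) ≥ 0.0818757697·n; that is, there exists N such that for every n ≥ N there is a family 𝒳 of n subsets of an n-element ground set, each of size at most 3, with Δ(𝒳) ≥ 0.0818757697·n. -/
open Finset

/-- The union of the first `k` sets in the ordering `π` (positions `1,…,k`,
i.e. 0-based indices `< k`). -/
def unionUpTo {α : Type*} [DecidableEq α] {m : ℕ} (X : Fin m → Finset α)
    (π : Equiv.Perm (Fin m)) (k : ℕ) : Finset α :=
  (Finset.univ.filter (fun i : Fin m => (i : ℕ) < k)).biUnion (fun i => X (π i))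

/-- `Δ(𝒳,π,k) = |X_{π(1)} ∪ ⋯ ∪ X_{π(k)}| − k`. -/
def delta {α : Type*} [DecidableEq α] {m : ℕ} (X : Fin m → Finset α)
    (π : Equiv.Perm (Fin m)) (k : ℕ) : ℤ :=
  ((unionUpTo X π k).card : ℤ) - k

/-- `Δ(𝒳,π) = max_{1 ≤ k ≤ m} Δ(𝒳,π,k)`. -/
noncomputable def DeltaPerm {α : Type*} [DecidableEq α] {m : ℕ} (X : Fin m → Finset α)
    (π : Equiv.Perm (Fin m)) : ℤ :=
  sSup {d : ℤ | ∃ k : ℕ, 1 ≤ k ∧ k ≤ m ∧ d = delta X π k}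

/-- `Δ(𝒳) = min_π Δ(𝒳,π)`. -/
noncomputable def DeltaMin {α : Type*} [DecidableEq α] {m : ℕ} (X : Fin m → Finset α) : ℤ :=
  sInf {d : ℤ | ∃ π : Equiv.Perm (Fin m), d = DeltaPerm X π}

/-- `f_c(n,m) = max_{𝒳 ∈ S(n,m,c)} Δ(𝒳)`, families of `m` subsets of an
`n`-element ground set, each of size at most `c`. -/
noncomputable def fFam (n m c : ℕ) : ℤ :=
  sSup {d : ℤ | ∃ X : Fin m → Finset (Fin n), (∀ i, (X i).card ≤ c) ∧ d = DeltaMin X}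

/-- Projection to the first coordinate. -/
def projSet {n : ℕ} (T : Finset (Fin n × Fin 3)) : Finset (Fin n) := T.image Prod.fst

lemma sum_fin3 (x z : ℝ) :
    ∑ S : Finset (Fin 3), (if S = ∅ then (1 : ℝ) else z * x ^ S.card)
      = 1 + z * ((1 + x) ^ 3 - 1) := by
  have h : (Finset.univ : Finset (Finset (Fin 3))) =
      {∅, {0}, {1}, {2}, {0,1}, {0,2}, {1,2}, {0,1,2}} := by decide
  rw [h]
  repeat rw [Finset.sum_insert (by decide)]
  rw [Finset.sum_singleton]
  have c1 : ({0,1} : Finset (Fin 3)).card = 2 := by decide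
  have c2 : ({0,2} : Finset (Fin 3)).card = 2 := by decide
  have c3 : ({1,2} : Finset (Fin 3)).card = 2 := by decide
  have c4 : ({0,1,2} : Finset (Fin 3)).card = 3 := by decide
  simp [c1, c2, c3, c4]
  ring

/-- The fibers of a set of slots. -/
def fiberEquiv (n : ℕ) : Finset (Fin n × Fin 3) ≃ (Fin n → Finset (Fin 3)) where
  toFun T := fun p => Finset.univ.filter (fun j => (p, j) ∈ T)
  invFun g := Finset.univ.filter (fun q => q.2 ∈ g q.1)
  left_inv T := by ext ⟨a, b⟩; simp
  right_inv g := by ext a b; simp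

lemma gen_fun (n : ℕ) (x z : ℝ) :
    ∑ T : Finset (Fin n × Fin 3), z ^ (projSet T).card * x ^ T.card
      = (1 + z * ((1 + x) ^ 3 - 1)) ^ n := by
  rw [← sum_fin3, Fintype.sum_pow, ← Equiv.sum_comp (fiberEquiv n)]
  refine Finset.sum_congr rfl fun T _ => ?_
  have h1 : T.card = ∑ p : Fin n, (fiberEquiv n T p).card := by
    rw [Finset.card_eq_sum_card_fiberwise (f := Prod.fst) (t := Finset.univ) (by simp)]
    refine Finset.sum_congr rfl fun p _ => ?_
    symm
    apply Finset.card_bij (fun j _ => (p, j))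
    · intro j hj; simpa [fiberEquiv] using hj
    · intro a _ b _ h; simpa using h
    · rintro ⟨a, b⟩ h
      simp only [Finset.mem_filter] at h
      obtain ⟨h, rfl⟩ := h
      exact ⟨b, by simpa [fiberEquiv] using h, rfl⟩
  have h2 : (projSet T).card = ∑ p : Fin n, (if fiberEquiv n T p = ∅ then 0 else 1) := by
    have : projSet T = Finset.univ.filter (fun p => ¬ fiberEquiv n T p = ∅) := by
      ext p
      simp [projSet, fiberEquiv, Finset.filter_eq_empty_iff]
    rw [this, Finset.card_filter]
    refine Finset.sum_congr rfl fun p _ => ?_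
    by_cases h : fiberEquiv n T p = ∅ <;> simp [h]
  rw [h1, h2, ← Finset.prod_pow_eq_pow_sum, ← Finset.prod_pow_eq_pow_sum,
    ← Finset.prod_mul_distrib]
  refine Finset.prod_congr rfl fun p _ => ?_
  by_cases h : fiberEquiv n T p = ∅ <;> simp [h]

/-- bad slot sets -/
def badSets (n k s : ℕ) : Finset (Finset (Fin n × Fin 3)) :=
  (Finset.powersetCard (3 * k) Finset.univ).filter (fun T => (projSet T).card ≤ s)

lemma bad_count (n k s : ℕ) :
    ((badSets n k s).card : ℝ) * ((1 / 229) ^ s * (11 / 2) ^ (3 * k)) ≤ (4021 / 1832) ^ n := by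
  have h := gen_fun n (11 / 2) (1 / 229)
  have e : (1 + (1 / 229 : ℝ) * ((1 + 11 / 2) ^ 3 - 1)) = 4021 / 1832 := by norm_num
  rw [e] at h
  rw [← h, ← nsmul_eq_mul]
  calc _ ≤ ∑ T ∈ badSets n k s, (1 / 229 : ℝ) ^ (projSet T).card * (11 / 2) ^ T.card := by
        apply Finset.card_nsmul_le_sum
        intro T hT
        simp only [badSets, Finset.mem_filter, Finset.mem_powersetCard] at hT
        rw [hT.1.2]
        apply mul_le_mul_of_nonneg_right _ (by positivity)
        exact pow_le_pow_of_le_one (by norm_num) (by norm_num) hT.2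
    _ ≤ _ := Finset.sum_le_sum_of_subset_of_nonneg (Finset.subset_univ _)
        (fun _ _ _ => by positivity)

/-- averaging over permutations -/
lemma perm_avg {β : Type*} [Fintype β] [DecidableEq β] (B : Finset (Finset β)) (A : Finset β)
    (hB : ∀ T ∈ B, T.card = A.card) :
    (Finset.univ.filter (fun σ : Equiv.Perm β => A.image σ ∈ B)).card
      * (Fintype.card β).choose A.card = (Fintype.card β).factorial * B.card := by
  have key : ∀ A' ∈ Finset.powersetCard A.card (Finset.univ : Finset β),
      (Finset.univ.filter (fun σ : Equiv.Perm β => A'.image σ ∈ B)).card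
      = (Finset.univ.filter (fun σ : Equiv.Perm β => A.image σ ∈ B)).card := by
    intro A' hA'
    have hc := (Finset.mem_powersetCard.1 hA').2
    obtain ⟨τ, hτ⟩ : ∃ τ : Equiv.Perm β, A.image τ = A' := by
      let e : {x // x ∈ A} ≃ {x // x ∈ A'} := Finset.equivOfCardEq hc.symm
      refine ⟨e.extendSubtype, ?_⟩
      apply Finset.eq_of_subset_of_card_le
      · intro y hy
        obtain ⟨x, hx, rfl⟩ := Finset.mem_image.1 hy
        exact e.extendSubtype_mem x hx
      · rw [Finset.card_image_of_injective _ (Equiv.injective _), hc]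
    subst hτ
    apply Finset.card_equiv (Equiv.mulRight τ)
    intro σ
    simp [Finset.image_image, Equiv.Perm.coe_mul]
  have h1 := Finset.sum_congr rfl key
  rw [Finset.sum_const, Finset.card_powersetCard, Finset.card_univ] at h1
  rw [mul_comm, ← smul_eq_mul, ← h1]
  simp_rw [Finset.card_filter]
  rw [Finset.sum_comm]
  have : ∀ σ : Equiv.Perm β, (∑ A' ∈ Finset.powersetCard A.card (Finset.univ : Finset β),
      if A'.image σ ∈ B then 1 else 0) = B.card := by
    intro σ
    rw [← Finset.card_filter]
    apply Finset.card_bij (fun T _ => T.image σ)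
    · intro T hT; exact (Finset.mem_filter.1 hT).2
    · intro S _ T _ h; exact Finset.image_injective σ.injective h
    · intro T hT
      refine ⟨T.image σ.symm, ?_, ?_⟩
      · simp only [Finset.mem_filter, Finset.mem_powersetCard, Finset.subset_univ, true_and]
        refine ⟨?_, ?_⟩
        · rw [Finset.card_image_of_injective _ σ.symm.injective, hB T hT]
        · simpa [Finset.image_image] using hT
      · simp [Finset.image_image]
  rw [Finset.sum_congr rfl (fun σ _ => this σ), Finset.sum_const, Finset.card_univ,
    Fintype.card_perm, smul_eq_mul]

lemma exists_good (n k s : ℕ)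
    (h : n.choose k * (badSets n k s).card < (3 * n).choose (3 * k)) :
    ∃ σ : Equiv.Perm (Fin n × Fin 3), ∀ A : Finset (Fin n), A.card = k →
      s < (projSet ((A ×ˢ (Finset.univ : Finset (Fin 3))).image σ)).card := by
  by_contra hcon
  push Not at hcon
  have hcov : (Finset.univ : Finset (Equiv.Perm (Fin n × Fin 3))) ⊆
      (Finset.powersetCard k (Finset.univ : Finset (Fin n))).biUnion (fun A =>
        Finset.univ.filter (fun σ : Equiv.Perm (Fin n × Fin 3) =>
          (A ×ˢ (Finset.univ : Finset (Fin 3))).image σ ∈ badSets n k s)) := by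
    intro σ _
    obtain ⟨A, hA, hs⟩ := hcon σ
    simp only [Finset.mem_biUnion, Finset.mem_powersetCard, Finset.mem_filter, badSets]
    refine ⟨A, ⟨Finset.subset_univ _, hA⟩, Finset.mem_univ _,
      ⟨Finset.subset_univ _, ?_⟩, hs⟩
    rw [Finset.card_image_of_injective _ σ.injective, Finset.card_product, hA]
    simp [mul_comm]
  have h1 := (Finset.card_le_card hcov).trans Finset.card_biUnion_le
  have h2 := Nat.mul_le_mul_right ((3 * n).choose (3 * k)) h1
  rw [Finset.sum_mul] at h2
  have h3 : ∀ A ∈ Finset.powersetCard k (Finset.univ : Finset (Fin n)),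
      (Finset.univ.filter (fun σ : Equiv.Perm (Fin n × Fin 3) =>
          (A ×ˢ (Finset.univ : Finset (Fin 3))).image σ ∈ badSets n k s)).card
        * (3 * n).choose (3 * k) = (3 * n).factorial * (badSets n k s).card := by
    intro A hA
    have hA := (Finset.mem_powersetCard.1 hA).2
    have hc : (A ×ˢ (Finset.univ : Finset (Fin 3))).card = 3 * k := by
      rw [Finset.card_product, hA]; simp [mul_comm]
    have := perm_avg (badSets n k s) (A ×ˢ (Finset.univ : Finset (Fin 3))) (by
      intro T hT
      rw [hc]
      exact (Finset.mem_powersetCard.1 (Finset.mem_filter.1 hT).1).2)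
    rw [hc, Fintype.card_prod, Fintype.card_fin, Fintype.card_fin, mul_comm n 3] at this
    exact this
  rw [Finset.sum_congr rfl h3, Finset.sum_const, Finset.card_powersetCard, Finset.card_univ,
    Finset.card_univ, Fintype.card_perm, Fintype.card_prod, Fintype.card_fin, Fintype.card_fin,
    mul_comm n 3, smul_eq_mul] at h2
  have hp := Nat.factorial_pos (3 * n)
  nlinarith [Nat.mul_lt_mul_of_pos_left h hp]

lemma choose_mul_le (a b c d : ℕ) : a.choose c * b.choose d ≤ (a + b).choose (c + d) := by
  rw [Nat.add_choose_eq]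
  exact Finset.single_le_sum (f := fun ij : ℕ × ℕ => a.choose ij.1 * b.choose ij.2)
    (fun _ _ => Nat.zero_le _) (a := (c, d)) (by simp)

lemma choose_cube (n k : ℕ) : n.choose k ^ 3 ≤ (3 * n).choose (3 * k) := by
  have h1 := choose_mul_le n n k k
  have h2 := choose_mul_le (n + n) n (k + k) k
  have e1 : n + n + n = 3 * n := by ring
  have e2 : k + k + k = 3 * k := by ring
  rw [e1, e2] at h2
  calc n.choose k ^ 3 = (n.choose k * n.choose k) * n.choose k := by ring
    _ ≤ _ := (Nat.mul_le_mul_right _ h1).trans h2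

/-- the mode of the binomial distribution with parameter 6/13 -/
lemma mode (n j : ℕ) (hj : j ≤ n) :
    n.choose j * 6 ^ j * 7 ^ (n - j) ≤
      n.choose (6 * (n + 1) / 13) * 6 ^ (6 * (n + 1) / 13) * 7 ^ (n - 6 * (n + 1) / 13) := by
  set k := 6 * (n + 1) / 13 with hk
  let t : ℕ → ℕ := fun j => n.choose j * 6 ^ j * 7 ^ (n - j)
  have step : ∀ j, j < n → t (j + 1) * (7 * (j + 1)) = t j * (6 * (n - j)) := by
    intro j hj
    have h := Nat.choose_succ_right_eq n j
    have e : n - j = (n - (j + 1)) + 1 := by omega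
    simp only [t]
    rw [e, ← e]
    calc _ = (n.choose (j + 1) * (j + 1)) * 6 ^ (j + 1) * 7 ^ (n - (j + 1) + 1) := by ring
      _ = _ := by rw [h, ← e]; ring
  have up : ∀ j, j + 1 ≤ k → j < n → t j ≤ t (j + 1) := by
    intro j h1 h2
    have h := step j h2
    have h3 : 7 * (j + 1) ≤ 6 * (n - j) := by omega
    have : t j * (7 * (j + 1)) ≤ t (j + 1) * (7 * (j + 1)) := by
      rw [h]; exact Nat.mul_le_mul_left _ h3
    exact Nat.le_of_mul_le_mul_right this (by omega)
  have down : ∀ j, k ≤ j → j < n → t (j + 1) ≤ t j := by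
    intro j h1 h2
    have h := step j h2
    have h3 : 6 * (n - j) ≤ 7 * (j + 1) := by omega
    have : t (j + 1) * (7 * (j + 1)) ≤ t j * (7 * (j + 1)) := by
      rw [h]; exact Nat.mul_le_mul_left _ h3
    exact Nat.le_of_mul_le_mul_right this (by omega)
  have hkn : k ≤ n := by omega
  change t j ≤ t k
  rcases le_total j k with h | h
  · have : ∀ d, d ≤ k → t (k - d) ≤ t k := by
      intro d
      induction d with
      | zero => intro _; simp
      | succ d ih =>
        intro hd
        refine le_trans ?_ (ih (by omega))
        have := up (k - (d + 1)) (by omega) (by omega)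
        rwa [show k - (d + 1) + 1 = k - d by omega] at this
    have := this (k - j) (by omega)
    rwa [show k - (k - j) = j by omega] at this
  · induction j, h using Nat.le_induction with
    | base => exact le_rfl
    | succ m hm ih => exact (down m hm (by omega)).trans (ih (by omega))

lemma choose_lower (n : ℕ) :
    13 ^ n ≤ (n + 1) * (n.choose (6 * (n + 1) / 13) * 6 ^ (6 * (n + 1) / 13)
      * 7 ^ (n - 6 * (n + 1) / 13)) := by
  have h := add_pow 6 7 n
  norm_num at h
  rw [h]
  calc _ ≤ ∑ j ∈ Finset.range (n + 1), (n.choose (6 * (n + 1) / 13) * 6 ^ (6 * (n + 1) / 13)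
      * 7 ^ (n - 6 * (n + 1) / 13)) := by
        refine Finset.sum_le_sum fun j hj => ?_
        have := mode n j (by simp at hj; omega)
        linarith
    _ = _ := by simp

lemma numeric : ∃ N : ℕ, ∀ n : ℕ, N ≤ n → ∀ k s : ℕ, k = 6 * (n + 1) / 13 →
    s = k + 16 * n / 195 →
    ((n : ℝ) + 1) ^ 2 * (229 ^ s * (2 / 11) ^ (3 * k)) * (4021 / 1832) ^ n
      * ((6 / 13) ^ k * (7 / 13) ^ (n - k)) ^ 2 < 1 := by
  obtain ⟨B, hB⟩ : ∃ B : ℝ, B = 229 * (2 / 11) ^ 3 * (6 / 7) ^ 2 := ⟨_, rfl⟩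
  have hB1 : 1 ≤ B := by rw [hB]; norm_num
  have hB0 : 0 < B := by linarith
  obtain ⟨r, hr⟩ : ∃ r : ℝ, r = B ^ 90 * 229 ^ 16 * (4021 / 1832) ^ 195
    * ((7 / 13) ^ 2) ^ 195 := ⟨_, rfl⟩
  have hr0 : 0 < r := by rw [hr]; positivity
  have hr1 : r < 1 := by rw [hr, hB]; norm_num
  have ht := tendsto_pow_const_mul_const_pow_of_abs_lt_one 390
    (r := r) (by rw [abs_of_pos hr0]; exact hr1)
  have ht2 := (ht.comp (Filter.tendsto_add_atTop_nat 1)).const_mul (B ^ 90 * r⁻¹)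
  rw [mul_zero] at ht2
  obtain ⟨N, hN⟩ := Filter.eventually_atTop.1 (ht2.eventually (gt_mem_nhds one_pos))
  refine ⟨N, fun n hn k s hk hs => ?_⟩
  have h := hN n hn
  simp only [Function.comp] at h
  push_cast at h
  have hkn : k ≤ n := by omega
  have e1 : ((n : ℝ) + 1) ^ 2 * (229 ^ s * (2 / 11) ^ (3 * k)) * (4021 / 1832) ^ n
      * ((6 / 13) ^ k * (7 / 13) ^ (n - k)) ^ 2
      = ((n : ℝ) + 1) ^ 2 * (B ^ k * 229 ^ (16 * n / 195) * (4021 / 1832) ^ n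
        * (7 / 13) ^ (2 * n)) := by
    obtain ⟨m, rfl⟩ := Nat.exists_eq_add_of_le hkn
    rw [hs, hB, Nat.add_sub_cancel_left]
    have : (6 / 13 : ℝ) = 6 / 7 * (7 / 13) := by norm_num
    rw [this]
    simp only [mul_pow, pow_add, ← pow_mul]
    ring
  rw [e1]
  rw [← pow_lt_one_iff_of_nonneg (by positivity) (n := 195) (by norm_num)]
  refine lt_of_le_of_lt ?_ h
  have e2 : B ^ 90 * r⁻¹ * (((n : ℝ) + 1) ^ 390 * r ^ (n + 1))
      = ((n : ℝ) + 1) ^ 390 * (B ^ 90 * r ^ n) := by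
    have hinv : r⁻¹ * r = 1 := inv_mul_cancel₀ hr0.ne'
    calc _ = (r⁻¹ * r) * (((n : ℝ) + 1) ^ 390 * (B ^ 90 * r ^ n)) := by
          rw [pow_succ r n]
          generalize ((n : ℝ) + 1) ^ 390 = u
          generalize B ^ 90 = v
          ring
      _ = _ := by rw [hinv, one_mul]
  have e3 : B ^ 90 * r ^ n = B ^ (90 * (n + 1)) * 229 ^ (16 * n)
      * ((4021 / 1832) ^ n * (7 / 13) ^ (2 * n)) ^ 195 := by
    rw [hr]
    simp only [mul_pow, ← pow_mul]
    rw [show 2 * 195 * n = 2 * n * 195 by ring, show 195 * n = n * 195 by ring,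
      show 90 * (n + 1) = 90 + 90 * n by ring, pow_add]
    simp only [mul_assoc]
  have e4 : (((n : ℝ) + 1) ^ 2 * (B ^ k * 229 ^ (16 * n / 195) * (4021 / 1832) ^ n
        * (7 / 13) ^ (2 * n))) ^ 195 = ((n : ℝ) + 1) ^ 390 * (B ^ (k * 195)
        * 229 ^ (16 * n / 195 * 195) * ((4021 / 1832) ^ n * (7 / 13) ^ (2 * n)) ^ 195) := by
    simp only [mul_pow, ← pow_mul, mul_assoc]
  rw [e2, e3, e4]
  have f1 : B ^ (k * 195) ≤ B ^ (90 * (n + 1)) := pow_le_pow_right₀ hB1 (by omega)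
  have f2 : (229 : ℝ) ^ (16 * n / 195 * 195) ≤ 229 ^ (16 * n) :=
    pow_le_pow_right₀ (by norm_num) (by omega)
  refine mul_le_mul_of_nonneg_left ?_ (by positivity)
  refine mul_le_mul_of_nonneg_right ?_ (by positivity)
  exact mul_le_mul f1 f2 (by positivity) (by positivity)

lemma count_ok : ∃ N : ℕ, ∀ n : ℕ, N ≤ n → ∀ k s : ℕ, k = 6 * (n + 1) / 13 →
    s = k + 16 * n / 195 →
    n.choose k * (badSets n k s).card < (3 * n).choose (3 * k) := by
  obtain ⟨N, hN⟩ := numeric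
  refine ⟨N, fun n hn k s hk hs => ?_⟩
  have h := hN n hn k s hk hs
  have hkn : k ≤ n := by omega
  have hc : 0 < n.choose k := Nat.choose_pos hkn
  have hl := choose_lower n
  rw [← hk] at hl
  have hl' : (13 : ℝ) ^ n ≤ (n + 1) * (n.choose k * 6 ^ k * 7 ^ (n - k)) := by exact_mod_cast hl
  have hb := bad_count n k s
  set b : ℝ := ((badSets n k s).card : ℝ) with hbdef
  set c : ℝ := (n.choose k : ℝ) with hcdef
  have hc' : 0 < c := Nat.cast_pos.2 hc
  have hq : (1 : ℝ) ≤ (n + 1) * c * ((6 / 13) ^ k * (7 / 13) ^ (n - k)) := by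
    have e : (13 : ℝ) ^ n = 13 ^ k * 13 ^ (n - k) := by
      rw [← pow_add, Nat.add_sub_cancel' hkn]
    rw [div_pow, div_pow]
    rw [e] at hl'
    have : (n + 1) * c * ((6 : ℝ) ^ k / 13 ^ k * (7 ^ (n - k) / 13 ^ (n - k)))
      = (n + 1) * (c * 6 ^ k * 7 ^ (n - k)) / (13 ^ k * 13 ^ (n - k)) := by
      field_simp
    rw [this, one_le_div (by positivity)]
    exact hl'
  have hb' : b ≤ (229 ^ s * (2 / 11) ^ (3 * k)) * (4021 / 1832) ^ n := by
    have e : ((229 : ℝ) ^ s * (2 / 11) ^ (3 * k)) * ((1 / 229) ^ s * (11 / 2) ^ (3 * k)) = 1 := by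
      rw [mul_mul_mul_comm, ← mul_pow, ← mul_pow]; norm_num
    calc b = (229 ^ s * (2 / 11) ^ (3 * k)) * (b * ((1 / 229) ^ s * (11 / 2) ^ (3 * k))) := by
          rw [mul_left_comm, e, mul_one]
      _ ≤ _ := by gcongr
  have hb2 : b < c ^ 2 := by
    set P : ℝ := (6 / 13) ^ k * (7 / 13) ^ (n - k) with hP
    have hPp : 0 < P := by positivity
    have hq2 : (1 : ℝ) ≤ ((n + 1) * c * P) ^ 2 := one_le_pow₀ hq
    have h3 : ((n : ℝ) + 1) ^ 2 * b * P ^ 2 < 1 := by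
      refine lt_of_le_of_lt ?_ h
      rw [mul_assoc (((n : ℝ) + 1) ^ 2) (229 ^ s * (2 / 11) ^ (3 * k))]
      gcongr
    have h4 : (((n : ℝ) + 1) * P) ^ 2 * b < (((n : ℝ) + 1) * P) ^ 2 * c ^ 2 := by
      calc _ = ((n : ℝ) + 1) ^ 2 * b * P ^ 2 := by ring
        _ < 1 := h3
        _ ≤ _ := hq2
        _ = _ := by ring
    exact lt_of_mul_lt_mul_left h4 (by positivity)
  have hb3 : (badSets n k s).card < n.choose k ^ 2 := by
    rw [hbdef, hcdef] at hb2
    exact_mod_cast hb2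
  calc _ < n.choose k * n.choose k ^ 2 := Nat.mul_lt_mul_of_pos_left hb3 hc
    _ = n.choose k ^ 3 := by ring
    _ ≤ _ := choose_cube n k

lemma delta_le {n m : ℕ} (X : Fin m → Finset (Fin n)) (π : Equiv.Perm (Fin m)) (k : ℕ) :
    delta X π k ≤ n := by
  unfold delta
  have := Finset.card_le_univ (unionUpTo X π k)
  rw [Fintype.card_fin] at this
  omega

lemma deltaPerm_le {n : ℕ} (hn : 1 ≤ n) (X : Fin n → Finset (Fin n)) (π : Equiv.Perm (Fin n)) :
    DeltaPerm X π ≤ n := by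
  refine csSup_le ⟨delta X π 1, 1, le_rfl, hn, rfl⟩ ?_
  rintro d ⟨k, _, _, rfl⟩
  exact delta_le X π k

lemma le_deltaPerm {n : ℕ} (X : Fin n → Finset (Fin n)) (π : Equiv.Perm (Fin n)) (k : ℕ)
    (h1 : 1 ≤ k) (h2 : k ≤ n) : delta X π k ≤ DeltaPerm X π := by
  refine le_csSup ⟨n, ?_⟩ ⟨k, h1, h2, rfl⟩
  rintro d ⟨k, _, _, rfl⟩
  exact delta_le X π k

lemma neg_le_deltaPerm {n : ℕ} (hn : 1 ≤ n) (X : Fin n → Finset (Fin n))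
    (π : Equiv.Perm (Fin n)) : -1 ≤ DeltaPerm X π := by
  refine le_trans ?_ (le_deltaPerm X π 1 le_rfl hn)
  unfold delta
  push_cast
  omega

lemma deltaMin_le {n : ℕ} (hn : 1 ≤ n) (X : Fin n → Finset (Fin n)) : DeltaMin X ≤ n := by
  refine le_trans (csInf_le ⟨-1, ?_⟩ ⟨1, rfl⟩) (deltaPerm_le hn X 1)
  rintro d ⟨π, rfl⟩
  exact neg_le_deltaPerm hn X π

lemma main_exists : ∃ N : ℕ, ∀ n : ℕ, N ≤ n →
      ∃ X : Fin n → Finset (Fin n), (∀ i, (X i).card ≤ 3) ∧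
        (0.0818757697 : ℝ) * n ≤ (DeltaMin X : ℝ) := by
  obtain ⟨N, hN⟩ := count_ok
  refine ⟨max N 13, fun n hn => ?_⟩
  have hn1 : N ≤ n := le_trans (le_max_left _ _) hn
  have hn2 : 13 ≤ n := le_trans (le_max_right _ _) hn
  obtain ⟨k, hk⟩ : ∃ k, k = 6 * (n + 1) / 13 := ⟨_, rfl⟩
  obtain ⟨σ, hσ⟩ := exists_good n k (k + 16 * n / 195) (hN n hn1 k _ hk rfl)
  let X : Fin n → Finset (Fin n) := fun i => Finset.univ.image (fun j : Fin 3 => (σ (i, j)).1)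
  refine ⟨X, fun i => ?_, ?_⟩
  · exact Finset.card_image_le.trans (by simp)
  have hmain : ((16 * n / 195 + 1 : ℕ) : ℤ) ≤ DeltaMin X := by
    refine le_csInf ⟨DeltaPerm X 1, 1, rfl⟩ ?_
    rintro d ⟨π, rfl⟩
    refine le_trans ?_ (le_deltaPerm X π k (by omega) (by omega))
    let A : Finset (Fin n) := (Finset.univ.filter (fun i : Fin n => (i : ℕ) < k)).image π
    have hA : A.card = k := by
      rw [Finset.card_image_of_injective _ π.injective, Fin.card_filter_val_lt]
      omega
    have hU : unionUpTo X π k = projSet ((A ×ˢ (Finset.univ : Finset (Fin 3))).image σ) := by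
      ext p
      simp only [unionUpTo, X, A, projSet, Finset.mem_biUnion, Finset.mem_filter,
        Finset.mem_univ, true_and, Finset.mem_image, Finset.mem_product, and_true]
      constructor
      · rintro ⟨a, ha, j, rfl⟩
        exact ⟨_, ⟨(π a, j), ⟨a, ha, rfl⟩, rfl⟩, rfl⟩
      · rintro ⟨_, ⟨⟨b, j⟩, ⟨a, ha, hab⟩, rfl⟩, rfl⟩
        subst hab
        exact ⟨a, ha, j, rfl⟩
    have := hσ A hA
    rw [← hU] at this
    unfold delta
    push_cast
    omega
  have h1 : ((16 * n / 195 + 1 : ℕ) : ℝ) ≤ (DeltaMin X : ℝ) := by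
    have := (Int.cast_le (R := ℝ)).2 hmain
    rwa [Int.cast_natCast] at this
  refine le_trans ?_ h1
  have h2 : 16 * n ≤ 195 * (16 * n / 195 + 1) := by omega
  have h3 : (16 : ℝ) * n ≤ 195 * ((16 * n / 195 + 1 : ℕ) : ℝ) := by exact_mod_cast h2
  have h4 : (0 : ℝ) ≤ n := Nat.cast_nonneg n
  norm_num at h3 ⊢
  linarith

/-- For all sufficiently large `n`, `f(n) ≥ 0.0818757697·n`: there is a family
`𝒳` of `n` subsets of an `n`-element ground set, each of size at most `3`,
with `Δ(𝒳) ≥ 0.0818757697·n`. -/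
theorem lower_bound_f3 :
    ∃ N : ℕ, ∀ n : ℕ, N ≤ n →
      (0.0818757697 : ℝ) * n ≤ (fFam n n 3 : ℝ) ∧
      ∃ X : Fin n → Finset (Fin n), (∀ i, (X i).card ≤ 3) ∧
        (0.0818757697 : ℝ) * n ≤ (DeltaMin X : ℝ) := by
  obtain ⟨N, hN⟩ := main_exists
  refine ⟨max N 1, fun n hn => ?_⟩
  have hn1 : 1 ≤ n := le_trans (le_max_right _ _) hn
  obtain ⟨X, hX, hd⟩ := hN n (le_trans (le_max_left _ _) hn)
  refine ⟨hd.trans ?_, X, hX, hd⟩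
  have : DeltaMin X ≤ fFam n n 3 := by
    refine le_csSup ⟨n, ?_⟩ ⟨X, hX, rfl⟩
    rintro d ⟨Y, _, rfl⟩
    exact deltaMin_le hn1 Y
  exact_mod_cast this
end

section
/- For every n ≥ 3, f(n) ≤ ⌈n/4⌉ + 2; that is, every family of n subsets of an n-element ground set, each of size at most 3, admits an ordering π with Δ(𝒳,π) ≤ ⌈n/4⌉ + 2. -/
open Finset

/-- `K` can be ordered so that every prefix has union of size at most `B + k`. -/
def GoodOrder {n : ℕ} (X : Fin n → Finset (Fin n)) (B : ℕ) (K : Finset (Fin n)) : Prop :=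
  ∃ l : List (Fin n), l.Nodup ∧ l.toFinset = K ∧
    ∀ k, k ≤ l.length → ((l.take k).toFinset.biUnion X).card ≤ B + k

lemma goodOrder_of_erase {n : ℕ} (X : Fin n → Finset (Fin n)) (B : ℕ) (K : Finset (Fin n))
    (x : Fin n) (hx : x ∈ K) (h : GoodOrder X B (K.erase x))
    (hK : (K.biUnion X).card ≤ B + K.card) : GoodOrder X B K := by
  obtain ⟨l, hnd, hl, hp⟩ := h
  have hxl : x ∉ l := by
    rw [← List.mem_toFinset, hl]; simp
  have hnd' : (l ++ [x]).Nodup := by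
    rw [← List.concat_eq_append]; exact hnd.concat hxl
  have hl' : (l ++ [x]).toFinset = K := by
    rw [List.toFinset_append, hl]
    ext y
    by_cases hy : y = x <;> simp [hy, hx]
  refine ⟨l ++ [x], hnd', hl', ?_⟩
  intro k hk
  by_cases hkl : k ≤ l.length
  · rw [List.take_append_of_le_length hkl]; exact hp k hkl
  · have hk' : k = (l ++ [x]).length := by
      simp at hk ⊢; omega
    have hc : K.card = k := by
      rw [hk', ← List.toFinset_card_of_nodup hnd', hl']
    rw [hk', List.take_length, hl', ← hk', ← hc]; exact hK

lemma card_biUnion_mul_le {n : ℕ} (X : Fin n → Finset (Fin n)) (hX : ∀ i, (X i).card ≤ 3)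
    (K : Finset (Fin n)) (d : ℕ)
    (h : ∀ p ∈ K.biUnion X, d ≤ (K.filter (fun i => p ∈ X i)).card) :
    (K.biUnion X).card * d ≤ K.card * 3 := by
  refine Finset.card_mul_le_card_mul (fun p i => p ∈ X i) ?_ ?_
  · intro p hp; exact h p hp
  · intro i _
    refine le_trans (Finset.card_le_card ?_) (hX i)
    intro p hp
    exact (Finset.mem_filter.1 hp).2

lemma biUnion_lt {n : ℕ} (X : Fin n → Finset (Fin n)) (K L : Finset (Fin n)) (hL : L ⊆ K)
    (p : Fin n) (hp : p ∈ K.biUnion X) (h : ∀ i ∈ L, p ∉ X i) :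
    (L.biUnion X).card + 1 ≤ (K.biUnion X).card := by
  refine Finset.card_lt_card ((Finset.ssubset_iff_of_subset
    (Finset.biUnion_subset_biUnion_of_subset_left X hL)).2 ⟨p, hp, ?_⟩)
  intro hp'
  obtain ⟨i, hi, hpi⟩ := Finset.mem_biUnion.1 hp'
  exact h i hi hpi

lemma goodOrder_main {n : ℕ} (X : Fin n → Finset (Fin n)) (hX : ∀ i, (X i).card ≤ 3)
    (B : ℕ) (hB : n + 8 ≤ 4 * B) : ∀ (s : ℕ) (K : Finset (Fin n)), K.card = s →
      (K.biUnion X).card ≤ B + K.card →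
      2 * (K.biUnion X).card ≤ n + 1 + K.card → GoodOrder X B K := by
  intro s
  induction s using Nat.strong_induction_on with
  | _ s ih =>
  intro K hs h1 h2
  rcases K.eq_empty_or_nonempty with rfl | hne
  · exact ⟨[], List.nodup_nil, by simp, by simp⟩
  have hun : (K.biUnion X).card ≤ n := by
    simpa using Finset.card_le_univ (K.biUnion X)
  by_cases c1 : ∀ p ∈ K.biUnion X, 2 ≤ (K.filter (fun i => p ∈ X i)).card
  · by_cases c2 : ∀ p ∈ K.biUnion X, 3 ≤ (K.filter (fun i => p ∈ X i)).card
    · have := card_biUnion_mul_le X hX K 3 c2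
      obtain ⟨x, hx⟩ := hne
      have hc := Finset.card_erase_add_one hx
      have hsub : ((K.erase x).biUnion X).card ≤ (K.biUnion X).card :=
        Finset.card_le_card (Finset.biUnion_subset_biUnion_of_subset_left X (Finset.erase_subset x K))
      exact goodOrder_of_erase X B K x hx
        (ih _ (by omega) (K.erase x) rfl (by omega) (by omega)) h1
    · push Not at c2
      obtain ⟨p, hp, hlt⟩ := c2
      have h3 := card_biUnion_mul_le X hX K 2 c1
      have h2' : (K.filter (fun i => p ∈ X i)).card = 2 := by
        have := c1 p hp; omega
      obtain ⟨x, y, hxy, hf⟩ := Finset.card_eq_two.1 h2'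
      have hx : x ∈ K ∧ p ∈ X x := by
        have : x ∈ K.filter (fun i => p ∈ X i) := by rw [hf]; simp
        simpa using this
      have hy : y ∈ K ∧ p ∈ X y := by
        have : y ∈ K.filter (fun i => p ∈ X i) := by rw [hf]; simp
        simpa using this
      have hy' : y ∈ K.erase x := Finset.mem_erase.2 ⟨hxy.symm, hy.1⟩
      have hc := Finset.card_erase_add_one hx.1
      have hc' := Finset.card_erase_add_one hy'
      have hsub : ((K.erase x).biUnion X).card ≤ (K.biUnion X).card :=
        Finset.card_le_card (Finset.biUnion_subset_biUnion_of_subset_left X (Finset.erase_subset x K))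
      have hlt := biUnion_lt X K ((K.erase x).erase y)
        ((Finset.erase_subset _ _).trans (Finset.erase_subset _ _)) p hp (by
          intro i hi hpi
          simp only [Finset.mem_erase] at hi
          have : i ∈ K.filter (fun i => p ∈ X i) := by simp [hi.2.2, hpi]
          rw [hf] at this
          simp at this
          tauto)
      refine goodOrder_of_erase X B K x hx.1 (goodOrder_of_erase X B _ y hy'
        (ih _ (by omega) _ rfl (by omega) (by omega)) (by omega)) h1
  · push Not at c1
    obtain ⟨p, hp, hlt⟩ := c1
    obtain ⟨x, hx, hpx⟩ := Finset.mem_biUnion.1 hp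
    have hc := Finset.card_erase_add_one hx
    have hlt := biUnion_lt X K (K.erase x) (Finset.erase_subset _ _) p hp (by
      intro i hi hpi
      have hi' := Finset.mem_erase.1 hi
      exact hi'.1 (Finset.card_le_one.1 (by omega : (K.filter (fun i => p ∈ X i)).card ≤ 1) i
        (by simp [hi'.2, hpi]) x (by simp [hx, hpx])))
    exact goodOrder_of_erase X B K x hx
      (ih _ (by omega) (K.erase x) rfl (by omega) (by omega)) h1

lemma exists_perm_of_good {n : ℕ} (hn : 1 ≤ n) (X : Fin n → Finset (Fin n)) (B : ℕ)
    (h : GoodOrder X B Finset.univ) : ∃ π : Equiv.Perm (Fin n), DeltaPerm X π ≤ B := by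
  obtain ⟨l, hnd, hl, hp⟩ := h
  have hlen : l.length = n := by
    rw [← List.toFinset_card_of_nodup hnd, hl]; simp
  let g : Fin n → Fin n := fun i => l.get (i.cast hlen.symm)
  have hg : Function.Injective g := by
    intro i j hij
    have := (List.nodup_iff_injective_get.1 hnd) hij
    simpa [Fin.ext_iff] using this
  refine ⟨Equiv.ofBijective g (Finite.injective_iff_bijective.1 hg), ?_⟩
  refine csSup_le ⟨_, 1, le_rfl, hn, rfl⟩ ?_
  rintro d ⟨k, _, hk, rfl⟩
  have hk' := hp k (by omega)
  have hsub : unionUpTo X (Equiv.ofBijective g (Finite.injective_iff_bijective.1 hg)) k ⊆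
      (l.take k).toFinset.biUnion X := by
    intro p hpm
    simp only [unionUpTo, Finset.mem_biUnion, Finset.mem_filter, Finset.mem_univ, true_and,
      Equiv.ofBijective_apply] at hpm
    obtain ⟨i, hik, hpi⟩ := hpm
    refine Finset.mem_biUnion.2 ⟨g i, ?_, hpi⟩
    rw [List.mem_toFinset, List.mem_take_iff_getElem]
    exact ⟨i, by have := i.2; omega, rfl⟩
  have := Finset.card_le_card hsub
  unfold delta
  omega

/-- For every `n ≥ 3`, `f(n) ≤ ⌈n/4⌉ + 2`: every family of `n` subsets of an
`n`-element ground set, each of size at most `3`, admits an ordering `π` with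
`Δ(𝒳,π) ≤ ⌈n/4⌉ + 2`. -/
theorem upper_bound_f3 (n : ℕ) (hn : 3 ≤ n) :
    fFam n n 3 ≤ ⌈(n : ℚ) / 4⌉ + 2 ∧
    ∀ X : Fin n → Finset (Fin n), (∀ i, (X i).card ≤ 3) →
      ∃ π : Equiv.Perm (Fin n), DeltaPerm X π ≤ ⌈(n : ℚ) / 4⌉ + 2 := by
  have key : ∀ X : Fin n → Finset (Fin n), (∀ i, (X i).card ≤ 3) →
      ∃ π : Equiv.Perm (Fin n), DeltaPerm X π ≤ ⌈(n : ℚ) / 4⌉ + 2 := by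
    intro X hX
    have hc : (n : ℤ) ≤ 4 * ⌈(n : ℚ) / 4⌉ := by
      have h := Int.le_ceil ((n : ℚ) / 4)
      have h' : (n : ℚ) ≤ 4 * (⌈(n : ℚ) / 4⌉ : ℚ) := by linarith
      exact_mod_cast h'
    obtain ⟨B, hB⟩ := Int.eq_ofNat_of_zero_le (show 0 ≤ ⌈(n : ℚ) / 4⌉ + 2 by omega)
    rw [hB]
    have hun : ((Finset.univ : Finset (Fin n)).biUnion X).card ≤ n := by
      simpa using Finset.card_le_univ (Finset.univ.biUnion X)
    exact exists_perm_of_good (by omega) X B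
      (goodOrder_main X hX B (by omega) n Finset.univ (by simp)
        (by rw [Finset.card_univ, Fintype.card_fin]; omega)
        (by rw [Finset.card_univ, Fintype.card_fin]; omega))
  refine ⟨?_, key⟩
  refine csSup_le ⟨_, fun _ => ∅, by simp, rfl⟩ ?_
  rintro d ⟨X, hX, rfl⟩
  obtain ⟨π, hπ⟩ := key X hX
  refine le_trans (csInf_le ?_ ⟨π, rfl⟩) hπ
  have : {d : ℤ | ∃ π : Equiv.Perm (Fin n), d = DeltaPerm X π} =
      Set.range (fun π : Equiv.Perm (Fin n) => DeltaPerm X π) := by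
    ext d; simp [eq_comm]
  rw [this]
  exact (Set.finite_range _).bddBelow
end
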